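/- Let σ be a Dynkin automorphism of the Weyl group W of a finite root system and let W^σ be the fixed subgroup, which is a Coxeter group on the generators {s_η : η ∈ I_σ}. If w₀ = s_{η₁} s_{η₂} ⋯ s_{η_m} is a reduced expression of the longest element w₀ in the Coxeter group W^σ, then replacing each s_η by a fixed reduced expression of s_η in W yields a reduced expression of w₀ in W; in particular ℓ(w₀) = Σ_k ℓ(s_{η_k}) where ℓ is the length function of W. -/

import Mathlib

section Exchange
variable {B W : Type*} [Group W] {M : CoxeterMatrix B} (cs : CoxeterSystem M W)

open Classical in
/-- The elementary step of the reflection cocycle. -/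
noncomputable def reflStep (i : B) : Function.End (W × ZMod 2) := fun p =>
  (cs.simple i * p.1 * cs.simple i, p.2 + if p.1 = cs.simple i then 1 else 0)

open Classical in
lemma reflStep_pow (i j : B) (n : ℕ) (x : W) (c : ZMod 2) :
    ((reflStep cs i * reflStep cs j) ^ n) (x, c) =
      ((cs.simple i * cs.simple j) ^ n * x * ((cs.simple i * cs.simple j) ^ n)⁻¹,
        c + ∑ k ∈ Finset.range (2 * n),
          if x = cs.simple j * (cs.simple i * cs.simple j) ^ k then 1 else 0) := by
  have hi := cs.simple_mul_simple_self i
  have hj := cs.simple_mul_simple_self j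
  set p := cs.simple i * cs.simple j with hp
  have hpinv : p⁻¹ = cs.simple j * cs.simple i := by simp [hp]
  have hsp : ∀ n : ℕ, cs.simple j * p ^ n = (p ^ n)⁻¹ * cs.simple j := by
    intro n
    induction n with
    | zero => simp
    | succ n ih =>
      rw [pow_succ, ← mul_assoc, ih, mul_assoc, ← pow_succ, pow_succ', mul_inv_rev, mul_assoc, hpinv,
        hp]
      simp [mul_assoc]
  induction n with
  | zero =>
    simp
    rfl
  | succ n ih =>
    rw [pow_succ']
    change reflStep cs i (reflStep cs j (((reflStep cs i * reflStep cs j) ^ n) (x, c))) = _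
    rw [ih]
    have e1 : (p ^ n * x * (p ^ n)⁻¹ = cs.simple j) ↔ x = cs.simple j * p ^ (2 * n) := by
      rw [two_mul, pow_add, ← mul_assoc, hsp, mul_inv_eq_iff_eq_mul, ← eq_inv_mul_iff_mul_eq,
        mul_assoc]
    have e2 : (cs.simple j * (p ^ n * x * (p ^ n)⁻¹) * cs.simple j = cs.simple i) ↔
        x = cs.simple j * p ^ (2 * n + 1) := by
      have : cs.simple j * p ^ (2 * n + 1) =
          (p ^ n)⁻¹ * (cs.simple j * cs.simple i * cs.simple j) * p ^ n := by
        rw [show 2 * n + 1 = n + 1 + n by ring, pow_add, pow_add, pow_one, ← mul_assoc, ← mul_assoc,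
          hsp, hp]
        simp only [mul_assoc]
      rw [this]
      constructor
      · intro h
        rw [← h]
        simp only [mul_assoc, CoxeterSystem.simple_mul_simple_cancel_left]
        simp
      · intro h
        rw [h]
        simp only [mul_assoc, mul_inv_cancel_left, mul_inv_cancel, mul_one]
        simp
    simp only [reflStep, e1, e2]
    rw [show 2 * (n + 1) = 2 * n + 1 + 1 by ring, Finset.sum_range_succ, Finset.sum_range_succ]
    refine Prod.ext ?_ ?_
    · simp only [pow_succ', mul_inv_rev, hpinv]
      rw [hp]
      simp only [mul_assoc]
    · simp only [add_assoc]

lemma reflStep_liftable : M.IsLiftable (reflStep cs) := by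
  classical
  intro i j
  funext ⟨x, c⟩
  rw [reflStep_pow, cs.simple_mul_simple_pow, two_mul, Finset.sum_range_add]
  simp only [pow_add, cs.simple_mul_simple_pow, one_mul, CharTwo.add_self_eq_zero]
  simp
  rfl

open Classical in
lemma reflStep_word (ω : List B) (x : W) (c : ZMod 2) :
    cs.lift ⟨reflStep cs, reflStep_liftable cs⟩ (cs.wordProd ω) (x, c) =
      (cs.wordProd ω * x * (cs.wordProd ω)⁻¹, c + ((cs.rightInvSeq ω).count x : ZMod 2)) := by
  induction ω with
  | nil =>
    simp
    rfl
  | cons i ω ih =>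
    rw [cs.wordProd_cons, map_mul]
    change cs.lift ⟨reflStep cs, reflStep_liftable cs⟩ (cs.simple i) (cs.lift ⟨reflStep cs, reflStep_liftable cs⟩ (cs.wordProd ω) (x, c)) = _
    rw [ih, cs.lift_apply_simple, reflStep]
    have e1 : (cs.wordProd ω * x * (cs.wordProd ω)⁻¹ = cs.simple i) ↔
        (cs.wordProd ω)⁻¹ * cs.simple i * cs.wordProd ω = x := by
      rw [mul_inv_eq_iff_eq_mul, ← eq_inv_mul_iff_mul_eq, mul_assoc, eq_comm]
    simp only [e1, CoxeterSystem.rightInvSeq, List.count_cons, beq_iff_eq]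
    refine Prod.ext ?_ ?_
    · simp [mul_assoc]
    · push_cast
      simp only [add_assoc]

lemma exchange (ω : List B) (i : B)
    (h : cs.length (cs.wordProd ω * cs.simple i) < cs.length (cs.wordProd ω)) :
    ∃ k < ω.length, cs.wordProd ω * cs.simple i = cs.wordProd (ω.eraseIdx k) := by
  classical
  obtain ⟨ω', hr, hw⟩ := cs.exists_isReduced (cs.wordProd ω * cs.simple i)
  have hp : cs.wordProd (ω'.concat i) = cs.wordProd ω := by
    rw [cs.wordProd_concat, ← hw]; simp
  have hred : cs.IsReduced (ω'.concat i) := by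
    have h1 := cs.length_wordProd_le (ω'.concat i)
    have h2 := hr.eq
    rw [← hw] at h2
    rw [CoxeterSystem.IsReduced]
    rw [hp] at h1 ⊢
    simp at h1 ⊢
    omega
  have hnd := hred.nodup_rightInvSeq
  have hmem : cs.simple i ∈ cs.rightInvSeq (ω'.concat i) := by
    rw [cs.rightInvSeq_concat]; simp
  have hc := List.count_eq_one_of_mem hnd hmem
  have a1 := reflStep_word cs (ω'.concat i) (cs.simple i) 0
  have a2 := reflStep_word cs ω (cs.simple i) 0
  rw [hp, a2, hc] at a1
  have a3 := congrArg Prod.snd a1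
  simp only [zero_add, Nat.cast_one] at a3
  have hmem' : cs.simple i ∈ cs.rightInvSeq ω := by
    by_contra hn
    rw [List.count_eq_zero_of_not_mem hn] at a3
    simp at a3
  obtain ⟨k, hk, hk'⟩ := List.mem_iff_getElem.mp hmem'
  refine ⟨k, by simpa using hk, ?_⟩
  rw [← cs.wordProd_mul_getD_rightInvSeq, List.getD_eq_getElem _ 1 hk, hk']

/-- exchange for a product of words -/
lemma exchange_append (a b : List B) (i : B)
    (h : cs.length (cs.wordProd a * cs.wordProd b * cs.simple i)
      < cs.length (cs.wordProd a * cs.wordProd b)) :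
    (∃ k < a.length, cs.wordProd a * cs.wordProd b * cs.simple i =
      cs.wordProd (a.eraseIdx k) * cs.wordProd b) ∨
    (∃ k < b.length, cs.wordProd b * cs.simple i = cs.wordProd (b.eraseIdx k)) := by
  rw [← cs.wordProd_append] at h
  obtain ⟨k, hk, he⟩ := exchange cs _ i h
  rcases lt_or_ge k a.length with hl | hl
  · left
    refine ⟨k, hl, ?_⟩
    rw [← cs.wordProd_append, he, List.eraseIdx_append_of_lt_length hl, cs.wordProd_append]
  · right
    rw [List.length_append] at hk
    refine ⟨k - a.length, by omega, ?_⟩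
    rw [List.eraseIdx_append_of_length_le hl, cs.wordProd_append, cs.wordProd_append,
      mul_assoc, mul_right_inj] at he
    exact he

lemma length_eraseIdx_lt (a : List B) (k : ℕ) (hk : k < a.length) :
    cs.length (cs.wordProd (a.eraseIdx k)) < a.length := by
  have := cs.length_wordProd_le (a.eraseIdx k)
  have := List.length_eraseIdx_add_one hk
  omega

/-- Parabolic subgroup -/
def parab (J : Set B) : Subgroup W := Subgroup.closure (cs.simple '' J)

lemma wordProd_mem_parab (J : Set B) (ω : List B) (h : ∀ i ∈ ω, i ∈ J) :
    cs.wordProd ω ∈ parab cs J := by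
  induction ω with
  | nil => simp
  | cons i ω ih =>
    rw [cs.wordProd_cons]
    refine mul_mem (Subgroup.subset_closure ⟨i, h i (by simp), rfl⟩) (ih ?_)
    intro k hk
    exact h k (by simp [hk])

lemma parab_word (J : Set B) (w : W) (hw : w ∈ parab cs J) :
    ∃ ω : List B, cs.IsReduced ω ∧ cs.wordProd ω = w ∧ ∀ i ∈ ω, i ∈ J := by
  have key : ∀ v : W, ∀ i ∈ J, (∃ ω : List B, cs.IsReduced ω ∧ cs.wordProd ω = v ∧ ∀ i ∈ ω, i ∈ J) →
      ∃ ω : List B, cs.IsReduced ω ∧ cs.wordProd ω = v * cs.simple i ∧ ∀ i ∈ ω, i ∈ J := by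
    rintro v i hi ⟨ω, hr, rfl, hJ⟩
    rcases cs.length_mul_simple (cs.wordProd ω) i with h | h
    · refine ⟨ω ++ [i], ?_, by simp [cs.wordProd_append], ?_⟩
      · have := hr.eq
        simp [CoxeterSystem.IsReduced, cs.wordProd_append]
        omega
      · intro k hk
        simp only [List.mem_append, List.mem_singleton] at hk
        rcases hk with hk | rfl
        · exact hJ k hk
        · exact hi
    · obtain ⟨k, hk, he⟩ := exchange cs ω i (by omega)
      refine ⟨ω.eraseIdx k, ?_, he.symm, fun l hl => hJ l (List.mem_of_mem_eraseIdx hl)⟩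
      have := hr.eq
      have := List.length_eraseIdx_add_one hk
      rw [CoxeterSystem.IsReduced, ← he]
      omega
  unfold parab at hw
  induction hw using Subgroup.closure_induction_right with
  | one => exact ⟨[], by simp [CoxeterSystem.IsReduced], by simp, by simp⟩
  | mul_right x hx y hy ih =>
    obtain ⟨i, hi, rfl⟩ := hy
    exact key _ i hi ih
  | mul_inv_cancel x hx y hy ih =>
    obtain ⟨i, hi, rfl⟩ := hy
    rw [cs.inv_simple]
    exact key _ i hi ih

/-- minimal coset elements are additive -/
lemma length_mul_of_minimal (J : Set B) (m : W)
    (hm : ∀ v ∈ parab cs J, cs.length m ≤ cs.length (m * v)) (ω : List B)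
    (hr : cs.IsReduced ω) (hJ : ∀ i ∈ ω, i ∈ J) :
    cs.length (m * cs.wordProd ω) = cs.length m + cs.length (cs.wordProd ω) := by
  induction ω using List.reverseRecOn with
  | nil => simp
  | append_singleton ω i ih =>
    have hr' : cs.IsReduced ω := by
      have := hr.take ω.length
      simpa using this
    have hJ' : ∀ k ∈ ω, k ∈ J := fun k hk => hJ k (by simp [hk])
    have ih := ih hr' hJ'
    have h1 := hr.eq
    have h2 := hr'.eq
    simp only [List.length_append, List.length_singleton] at h1
    obtain ⟨a, ha, rfl⟩ := cs.exists_isReduced m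
    rw [h1]
    rw [cs.wordProd_append, cs.wordProd_singleton, ← mul_assoc] at *
    rcases cs.length_mul_simple (cs.wordProd a * cs.wordProd ω) i with h | h
    · omega
    · exfalso
      rcases exchange_append cs a ω i (by omega) with ⟨k, hk, he⟩ | ⟨k, hk, he⟩
      · have hv : cs.wordProd ω * cs.simple i * (cs.wordProd ω)⁻¹ ∈ parab cs J := by
          have := wordProd_mem_parab cs J ω hJ'
          exact mul_mem (mul_mem this (Subgroup.subset_closure ⟨i, hJ i (by simp), rfl⟩))
            (inv_mem this)
        have h3 := hm _ hv
        have h4 := length_eraseIdx_lt cs a k hk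
        have h5 := ha.eq
        rw [← mul_assoc, ← mul_assoc, he, mul_inv_cancel_right] at h3
        omega
      · have h4 := length_eraseIdx_lt cs ω k hk
        rw [← he] at h4
        omega

lemma length_mul_of_no_descent (J : Set B) (w : W)
    (hw : ∀ i ∈ J, ¬ cs.IsRightDescent w i) (v : W) (hv : v ∈ parab cs J) :
    cs.length (w * v) = cs.length w + cs.length v := by
  suffices hm : ∀ v ∈ parab cs J, cs.length w ≤ cs.length (w * v) by
    obtain ⟨ω, hr, rfl, hJ⟩ := parab_word cs J v hv
    exact length_mul_of_minimal cs J w hm ω hr hJ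
  -- a minimal element of the coset
  obtain ⟨u, hu, hmin⟩ : ∃ u ∈ parab cs J, ∀ u' ∈ parab cs J,
      cs.length (w * u) ≤ cs.length (w * u') := by
    obtain ⟨u, hu⟩ := exists_minimal_of_wellFoundedLT (fun n => ∃ u ∈ parab cs J,
      cs.length (w * u) = n) ⟨_, 1, one_mem _, rfl⟩
    obtain ⟨⟨u', hu', rfl⟩, h2⟩ := hu
    refine ⟨u', hu', fun x hx => ?_⟩
    by_contra hlt
    exact hlt (h2 ⟨x, hx, rfl⟩ (by omega))
  have hmin' : ∀ v ∈ parab cs J, cs.length (w * u) ≤ cs.length (w * u * v) := by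
    intro v hv
    rw [mul_assoc]
    exact hmin _ (mul_mem hu hv)
  obtain ⟨ω, hr, hω, hJ⟩ := parab_word cs J u⁻¹ (inv_mem hu)
  have hadd := length_mul_of_minimal cs J (w * u) hmin' ω hr hJ
  rw [hω, mul_inv_cancel_right] at hadd
  rcases List.eq_nil_or_concat ω with rfl | ⟨ω', i, rfl⟩
  · have : u = 1 := by simpa using hω.symm
    subst this
    simpa using hmin
  · exfalso
    simp only [List.concat_eq_append] at *
    have hi : i ∈ J := hJ i (by simp)
    apply hw i hi
    have hr' : cs.IsReduced ω' := by
      have := hr.take ω'.length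
      simpa using this
    have hadd' := length_mul_of_minimal cs J (w * u) hmin' ω' hr' (fun k hk => hJ k (by simp [hk]))
    have h1 := hr.eq
    have h2 := hr'.eq
    rw [hω] at h1
    simp only [List.length_append, List.length_singleton] at h1
    have : w * cs.simple i = w * u * cs.wordProd ω' := by
      have : u⁻¹ * cs.simple i = cs.wordProd ω' := by
        rw [← hω, cs.wordProd_append]; simp
      rw [← this]; group
    rw [CoxeterSystem.IsRightDescent, this, hadd', hadd]
    omega

/-- if all of `J` are descents of `w`, any `u` in the parabolic can be split off. -/
lemma length_mul_of_all_descent (J : Set B) (w : W)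
    (hw : ∀ i ∈ J, cs.IsRightDescent w i) (ω : List B)
    (hr : cs.IsReduced ω) (hJ : ∀ i ∈ ω, i ∈ J) :
    cs.length (w * (cs.wordProd ω)⁻¹) + ω.length = cs.length w := by
  induction ω using List.reverseRecOn with
  | nil => simp
  | append_singleton ω i ih =>
    have hr' : cs.IsReduced ω := by
      have := hr.take ω.length
      simpa using this
    have hJ' : ∀ k ∈ ω, k ∈ J := fun k hk => hJ k (by simp [hk])
    have ih := ih hr' hJ'
    obtain ⟨a, ha, hwa⟩ := cs.exists_isReduced (w * (cs.wordProd ω)⁻¹)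
    have hw' : w = cs.wordProd a * cs.wordProd ω := by rw [← hwa]; simp
    have hd := hw i (hJ i (by simp))
    have h1 := hr.eq
    have h2 := hr'.eq
    have h3 := ha.eq
    rw [← hwa] at h3
    rw [cs.wordProd_append, cs.wordProd_singleton] at *
    simp only [List.length_append, List.length_singleton] at *
    rw [CoxeterSystem.IsRightDescent, hw'] at hd
    rcases exchange_append cs a ω i hd with ⟨k, hk, he⟩ | ⟨k, hk, he⟩
    · have h4 := length_eraseIdx_lt cs a k hk
      have h5 : w * (cs.wordProd ω * cs.simple i)⁻¹ = cs.wordProd (a.eraseIdx k) := by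
        rw [mul_inv_eq_iff_eq_mul, ← mul_assoc, ← he, ← hw']; simp
      have h6 := cs.length_le_length_mul_add_right w (cs.wordProd ω * cs.simple i)⁻¹
      rw [cs.length_inv, h1] at h6
      rw [← h5] at h4
      omega
    · have h4 := length_eraseIdx_lt cs ω k hk
      rw [← he] at h4
      omega

lemma parab_descent (J : Set B) (w : W) (hw : w ∈ parab cs J) (h1 : w ≠ 1) :
    ∃ i ∈ J, cs.IsRightDescent w i := by
  obtain ⟨ω, hr, rfl, hJ⟩ := parab_word cs J w hw
  rcases List.eq_nil_or_concat ω with rfl | ⟨ω', i, rfl⟩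
  · simp at h1
  · simp only [List.concat_eq_append] at *
    refine ⟨i, hJ i (by simp), ?_⟩
    have h2 := hr.eq
    have h3 := cs.length_wordProd_le ω'
    simp only [List.length_append, List.length_singleton] at h2
    rw [CoxeterSystem.IsRightDescent, h2, cs.wordProd_append]
    simp
    omega

end Exchange

theorem stmt12 {B B' W W' : Type*} [Group W] [Group W'] [Finite W]
    {M : CoxeterMatrix B} (cs : CoxeterSystem M W)
    {M' : CoxeterMatrix B'} (cs' : CoxeterSystem M' W')
    (e : B ≃ B) (hM : ∀ i j, M (e i) (e j) = M i j)
    (φ : W ≃* W) (hφ : ∀ i, φ (cs.simple i) = cs.simple (e i))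
    (ι : W' →* W) (hι : Function.Injective ι)
    (hrange : Set.range ι = {w : W | φ w = w})  -- ι identifies W' with W^σ
    (η : B' → Set B)
    (horb : ∀ j, ∃ i₀ ∈ η j, ∀ i, i ∈ η j ↔ ∃ n : ℕ, (⇑e)^[n] i₀ = i)  -- the σ-orbits
    -- ι(simple j) is the longest element s_η of the parabolic subgroup W_{η j}:
    (hmem : ∀ j, ι (cs'.simple j) ∈ Subgroup.closure (cs.simple '' η j))
    (hmax : ∀ j, ∀ u ∈ Subgroup.closure (cs.simple '' η j),
      cs.length u ≤ cs.length (ι (cs'.simple j)))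
    (w₀ : W) (w₀' : W') (hw₀ : ι w₀' = w₀)
    (hlongest : ∀ w : W, cs.length w ≤ cs.length w₀)       -- w₀ is longest in W
    (hlongest' : ∀ w : W', cs'.length w ≤ cs'.length w₀')  -- w₀' is longest in W^σ
    (ω : List B') (hred : cs'.IsReduced ω) (hprod : cs'.wordProd ω = w₀')
    (r : B' → List B)
    (hr : ∀ j, cs.wordProd (r j) = ι (cs'.simple j) ∧ cs.IsReduced (r j)) :
    cs.wordProd (ω.flatMap r) = w₀ ∧ cs.IsReduced (ω.flatMap r) ∧
      cs.length w₀ = (ω.map (fun j => cs.length (ι (cs'.simple j)))).sum := by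
  have hfix : ∀ u, φ (ι u) = ι u := fun u => by
    have : ι u ∈ Set.range ι := ⟨u, rfl⟩
    rw [hrange] at this
    exact this
  -- `φ` preserves length
  have hword : ∀ l : List B, φ (cs.wordProd l) = cs.wordProd (l.map e) := by
    intro l
    induction l with
    | nil => simp
    | cons i l ih => rw [cs.wordProd_cons, map_mul, ih, hφ, List.map_cons, cs.wordProd_cons]
  have hlen : ∀ w, cs.length (φ w) = cs.length w := by
    intro w
    apply le_antisymm
    · obtain ⟨l, hl, rfl⟩ := cs.exists_isReduced w
      rw [hword, hl.eq]
      simpa using cs.length_wordProd_le (l.map e)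
    · obtain ⟨l, hl, hw⟩ := cs.exists_isReduced (φ w)
      have : w = cs.wordProd (l.map e.symm) := by
        apply φ.injective
        rw [hword, hw]; simp
      rw [hw, hl.eq, this]
      simpa using cs.length_wordProd_le (l.map e.symm)
  -- all or none
  have hdesc : ∀ w, φ w = w → ∀ (n : ℕ) (i : B),
      cs.IsRightDescent w (e^[n] i) ↔ cs.IsRightDescent w i := by
    intro w hw n i
    induction n with
    | zero => simp
    | succ n ih =>
      rw [← ih, Function.iterate_succ_apply']
      unfold CoxeterSystem.IsRightDescent
      rw [← hlen (w * cs.simple (e^[n] i)), map_mul, hw, hφ]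
  have hall : ∀ w, φ w = w → ∀ j, ∀ i ∈ η j, cs.IsRightDescent w i →
      ∀ i' ∈ η j, cs.IsRightDescent w i' := by
    intro w hw j i hi hd i' hi'
    obtain ⟨i₀, _, h0⟩ := horb j
    obtain ⟨n, rfl⟩ := (h0 i).1 hi
    obtain ⟨n', rfl⟩ := (h0 i').1 hi'
    rw [hdesc w hw] at hd ⊢
    exact hd
  have hne : ∀ j, ι (cs'.simple j) ≠ 1 := by
    intro j h
    have : cs'.simple j = 1 := hι (by rw [h, map_one])
    have h2 := cs'.length_simple j
    rw [this] at h2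
    simp at h2
  have hinv : ∀ j, (ι (cs'.simple j))⁻¹ = ι (cs'.simple j) := by
    intro j
    rw [← map_inv, cs'.inv_simple]
  -- a fixed nontrivial element of a parabolic is the longest one
  have huniq : ∀ w, φ w = w → ∀ j, w ∈ parab cs (η j) → w ≠ 1 → w = ι (cs'.simple j) := by
    intro w hw j hj h1
    obtain ⟨i, hi, hd⟩ := parab_descent cs (η j) w hj h1
    have hd := hall w hw j i hi hd
    obtain ⟨l, hl, hl', hlJ⟩ := parab_word cs (η j) _ (hmem j)
    have h2 := length_mul_of_all_descent cs (η j) w hd l hl hlJ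
    have h3 := hmax j w hj
    have h4 := hl.eq
    rw [hl'] at h2 h4
    have : cs.length (w * (ι (cs'.simple j))⁻¹) = 0 := by omega
    rw [cs.length_eq_zero_iff] at this
    exact mul_inv_eq_one.1 this
  -- exchange property in the fixed subgroup
  have hex : ∀ (l : List B') (j : B'), (∃ i ∈ η j, cs.IsRightDescent (ι (cs'.wordProd l)) i) →
      ∃ k < l.length, cs'.wordProd l * cs'.simple j = cs'.wordProd (l.eraseIdx k) := by
    intro l j
    induction l with
    | nil =>
      rintro ⟨i, hi, hd⟩
      simp [cs.not_isRightDescent_one] at hd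
    | cons p l ih =>
      rintro ⟨i, hi, hd⟩
      by_cases hx : ∃ i ∈ η j, cs.IsRightDescent (ι (cs'.wordProd l)) i
      · obtain ⟨k, hk, he⟩ := ih hx
        refine ⟨k + 1, by simpa using hk, ?_⟩
        rw [cs'.wordProd_cons, mul_assoc, he, List.eraseIdx_cons_succ, cs'.wordProd_cons]
      · push Not at hx
        refine ⟨0, by simp, ?_⟩
        set x := ι (cs'.wordProd l) with hxdef
        have hd := hall _ (hfix _) j i hi hd
        rw [cs'.wordProd_cons, map_mul, ← hxdef] at hd
        obtain ⟨a, ha, hax, haJ⟩ := parab_word cs (η p) _ (hmem p)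
        obtain ⟨b, hb, hbx⟩ := cs.exists_isReduced x
        have hconj : ∀ t ∈ η j, x * cs.simple t * x⁻¹ ∈ parab cs (η p) := by
          intro t ht
          have hdt := hd t ht
          rw [CoxeterSystem.IsRightDescent, ← hax, hbx] at hdt
          rcases exchange_append cs a b t hdt with ⟨k, hk, he⟩ | ⟨k, hk, he⟩
          · rw [← hbx] at he
            have : x * cs.simple t * x⁻¹ = (cs.wordProd a)⁻¹ * cs.wordProd (a.eraseIdx k) := by
              rw [mul_inv_eq_iff_eq_mul, mul_assoc, ← he]; group
            rw [this]
            exact mul_mem (inv_mem (wordProd_mem_parab cs _ _ haJ))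
              (wordProd_mem_parab cs _ _ (fun i hi => haJ i (List.mem_of_mem_eraseIdx hi)))
          · exfalso
            apply hx t ht
            have := length_eraseIdx_lt cs b k hk
            rw [CoxeterSystem.IsRightDescent, hbx, he, hb.eq]
            exact this
        have hsub : parab cs (η j) ≤ (parab cs (η p)).comap (MulAut.conj x).toMonoidHom := by
          unfold parab
          rw [Subgroup.closure_le]
          rintro _ ⟨t, ht, rfl⟩
          have := hconj t ht
          unfold parab at this
          simpa using this
        have hs : x * ι (cs'.simple j) * x⁻¹ ∈ parab cs (η p) := by
          simpa using hsub (hmem j)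
        have heq := huniq _ (by rw [map_mul, map_mul, map_inv, hfix, hfix]) p hs (by
          intro h
          rw [mul_inv_eq_one] at h
          exact hne j (by simpa using h))
        rw [mul_inv_eq_iff_eq_mul, hxdef, ← map_mul, ← map_mul] at heq
        have := hι heq
        rw [cs'.wordProd_cons, mul_assoc, this]
        simp
  -- additivity
  have hadd : ∀ l : List B', cs'.IsReduced l →
      cs.length (ι (cs'.wordProd l)) = (l.map (fun j => cs.length (ι (cs'.simple j)))).sum := by
    intro l
    induction l using List.reverseRecOn with
    | nil => simp
    | append_singleton l j ih =>
      intro hl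
      have hl' : cs'.IsReduced l := by
        have := hl.take l.length
        simpa using this
      have hno : ∀ i ∈ η j, ¬ cs.IsRightDescent (ι (cs'.wordProd l)) i := by
        intro i hi hd
        obtain ⟨k, hk, he⟩ := hex l j ⟨i, hi, hd⟩
        have h1 := length_eraseIdx_lt cs' l k hk
        have h2 := hl.eq
        rw [cs'.wordProd_append, cs'.wordProd_singleton, he] at h2
        simp at h2
        omega
      have := length_mul_of_no_descent cs (η j) _ hno _ (hmem j)
      rw [cs'.wordProd_append, cs'.wordProd_singleton, map_mul, this, ih hl']
      simp
  have hflat : ∀ l : List B', cs.wordProd (l.flatMap r) = ι (cs'.wordProd l) := by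
    intro l
    induction l with
    | nil => simp
    | cons j l ih =>
      rw [List.flatMap_cons, cs.wordProd_append, ih, (hr j).1, cs'.wordProd_cons, map_mul]
  have hL := hadd ω hred
  rw [hprod, hw₀] at hL
  have hP : cs.wordProd (ω.flatMap r) = w₀ := by rw [hflat, hprod, hw₀]
  refine ⟨hP, ?_, hL⟩
  rw [CoxeterSystem.IsReduced, hP, hL, List.length_flatMap]
  congr 1
  apply List.map_congr_left
  intro j _
  rw [← (hr j).1, (hr j).2.eq]
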